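/- arXiv:2509.24362 — 3 statements merged into one kernel-verified Lean document; each statement's English description precedes it below -/
import Mathlib

section
/- Let M be an abelian group (written multiplicatively), let I and J be types, and let α: I → I → I → M be a completely normalised 2-cocycle: (i) α i j k = 1 whenever two of the indices coincide, (ii) interchanging any two of the three arguments inverts the value, and (iii) α i j l · α j k l = α i k l · α i j k for all i, j, k, l ∈ I. Given two maps τ, σ: J → I, define η: J → J → M by η r s = α (σ r) (τ r) (τ s) · (α (τ s) (σ r) (σ s))⁻¹. Then for all r, s, t ∈ J: (a) η r r = 1; (b) η r s = (η s r)⁻¹; and (c) α (τ r) (τ s) (τ t) = α (σ r) (σ s) (σ t) · η s t · η t r · η r s. In particular, the pullbacks τ*α and σ*α are cohomologous 2-cocycles. -/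
/-!
The 1-cochain `η` is, up to an even permutation of the arguments of its second term, the pullback
of `α` along the prism operator `P[r s] = [σr τr τs] - [σr σs τs]`. In additive notation, applying
the cocycle condition to the three tetrahedra of
`P[r s t] = [σr τr τs τt] - [σr σs τs τt] + [σr σs σt τt]`
kills `α` on `∂P[r s t]`, and the homotopy formula `∂P + P∂ = τ - σ` becomes (c) once
`η t r = -η r t`. That antisymmetry is the cocycle condition on the tetrahedron
`[σr σs τr τs]`. The computations are linear, so they are done in an additive group.
-/

/-- The antisymmetry of the prism cochain, for vertices `A B` of the upper edge and `a b` of the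
lower edge. -/
theorem prism_antisymm {N I : Type*} [AddCommGroup N] (α : I → I → I → N)
    (hs₁ : ∀ i j k, α j i k = -α i j k) (hs₂ : ∀ i j k, α i k j = -α i j k)
    (hcoc : ∀ i j k l, α i j l + α j k l = α i k l + α i j k) (A B a b : I) :
    α A a b + -α b A B = -(α B b a + -α a B A) := by
  have h := hcoc A B a b
  have h₁ : α b A B = α A B b := by rw [hs₁ A b B, hs₂ A B b, neg_neg]
  have h₂ : α a B A = -α A B a := by rw [hs₂ a A B, hs₁ A a B, hs₂ A B a, neg_neg]
  rw [h₁, h₂, hs₂ B a b]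
  linear_combination (norm := module) -h

/-- The homotopy formula for the prism with upper face `A B C` and lower face `a b c`, evaluated
on a cocycle. -/
theorem prism_homotopy {N I : Type*} [AddCommGroup N] (α : I → I → I → N)
    (hs₁ : ∀ i j k, α j i k = -α i j k) (hs₂ : ∀ i j k, α i k j = -α i j k)
    (hcoc : ∀ i j k l, α i j l + α j k l = α i k l + α i j k) (A B C a b c : I) :
    α a b c = α A B C + (α B b c + -α c B C) + (α C c a + -α a C A) + (α A a b + -α b A B) := by
  have hcyc : ∀ i j k, α k i j = α i j k := fun i j k => by rw [hs₁ i k j, hs₂ i j k, neg_neg]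
  rw [prism_antisymm α hs₁ hs₂ hcoc C A c a, hcyc B C c, hcyc A C c, hcyc A B b]
  -- The three tetrahedra of the prism, with the signs of the prism operator.
  linear_combination (norm := module)
    hcoc A a b c - hcoc A B b c + hcoc A B C c

/-- Two refining maps yield cohomologous pullback cocycles: properties of the explicit
1-cochain `η r s = α (σ r) (τ r) (τ s) * (α (τ s) (σ r) (σ s))⁻¹`. -/
theorem stmt5 {M : Type*} [CommGroup M] {I J : Type*}
    (α : I → I → I → M)
    (hnorm : ∀ i j k, i = j ∨ i = k ∨ j = k → α i j k = 1)
    (hswap₁ : ∀ i j k, α j i k = (α i j k)⁻¹)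
    (hswap₂ : ∀ i j k, α i k j = (α i j k)⁻¹)
    (hswap₃ : ∀ i j k, α k j i = (α i j k)⁻¹)
    (hcoc : ∀ i j k l, α i j l * α j k l = α i k l * α i j k)
    (τ σ : J → I)
    (η : J → J → M)
    (hη : ∀ r s, η r s = α (σ r) (τ r) (τ s) * (α (τ s) (σ r) (σ s))⁻¹) :
    (∀ r, η r r = 1) ∧
    (∀ r s, η r s = (η s r)⁻¹) ∧
    (∀ r s t, α (τ r) (τ s) (τ t) = α (σ r) (σ s) (σ t) * η s t * η t r * η r s) := by
  refine ⟨fun r => ?_, fun r s => ?_, fun r s t => ?_⟩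
  · rw [hη, hnorm _ _ _ (.inr (.inr rfl)), hnorm _ _ _ (.inr (.inr rfl)), inv_one, mul_one]
  · rw [hη, hη]
    exact prism_antisymm (N := Additive M) α hswap₁ hswap₂ hcoc _ _ _ _
  · rw [hη, hη, hη]
    exact prism_homotopy (N := Additive M) α hswap₁ hswap₂ hcoc _ _ _ _ _ _
end

section
/- Let G be a group, I and J types, τ: J → I a map, and α: I → I → I → G a function taking values in the centre of G which is completely normalised ((i) α i j k = 1 whenever two of the indices coincide, (ii) interchanging any two of the three arguments inverts the value) and satisfies the 2-cocycle identity α i j l · α j k l = α i k l · α i j k for all i, j, k, l ∈ I. Let g: J → J → G satisfy the pullback-twisted cocycle condition g u t · g t s = g u s · α (τ u) (τ t) (τ s) for all s, t, u ∈ J. Define ψ: (J × I) → (J × I) → G by ψ (t, j) (s, i) = α j i (τ t) · (α i (τ t) (τ s))⁻¹ · g t s. Then for all s, t, u ∈ J and i, j, k ∈ I: ψ (u, k) (t, j) · ψ (t, j) (s, i) = α k j i · ψ (u, k) (s, i). -/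
/-!
The values of `α` are central, so after moving them to the left and using the twisted cocycle
condition for `g`, the claim is an identity in the abelian group `Subgroup.center G`. Written
additively, with `U = τ u`, `T = τ t`, `S = τ s`, the difference of its two sides is the sum of the
cocycle identities on the tetrahedra `(k, j, i, U)`, `(j, i, U, T)` and `(i, U, T, S)`.
-/

/-- The abelian identity obtained by adding up three instances of the cocycle identity. -/
theorem cocycle_three_tetrahedra {A I : Type*} [AddCommGroup A] (a : I → I → I → A)
    (h : ∀ i j k l, a i j l + a j k l = a i k l + a i j k) (i j k S T U : I) :
    a k j U - a j U T + (a j i T - a i T S) + a U T S = a k j i + (a k i U - a i U S) := by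
  have h₁ := h k j i U
  have h₂ := h j i U T
  have h₃ := h i U T S
  grind

/-- Essential surjectivity of the refinement functor: the corrected transition data
`ψ (t, j) (s, i) = α j i (τ t) * (α i (τ t) (τ s))⁻¹ * g t s` is an `α`-twisted cocycle. -/
theorem stmt7 {G : Type*} [Group G] {I J : Type*} (τ : J → I)
    (α : I → I → I → G)
    (hcent : ∀ i j k, α i j k ∈ Subgroup.center G)
    (hnorm : ∀ i j k, i = j ∨ i = k ∨ j = k → α i j k = 1)
    (hswap₁ : ∀ i j k, α j i k = (α i j k)⁻¹)
    (hswap₂ : ∀ i j k, α i k j = (α i j k)⁻¹)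
    (hswap₃ : ∀ i j k, α k j i = (α i j k)⁻¹)
    (hcoc : ∀ i j k l, α i j l * α j k l = α i k l * α i j k)
    (g : J → J → G)
    (hg : ∀ s t u, g u t * g t s = g u s * α (τ u) (τ t) (τ s))
    (ψ : J × I → J × I → G)
    (hψ : ∀ (s t : J) (i j : I), ψ (t, j) (s, i) = α j i (τ t) * (α i (τ t) (τ s))⁻¹ * g t s) :
    ∀ (s t u : J) (i j k : I),
      ψ (u, k) (t, j) * ψ (t, j) (s, i) = α k j i * ψ (u, k) (s, i) := by
  intro s t u i j k
  let _ : CommGroup (Subgroup.center G) :=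
    { (inferInstance : Group (Subgroup.center G)) with mul_comm := fun a b => Subtype.ext (a.2.comm b) }
  have key := congrArg (fun x => ((Additive.toMul x : Subgroup.center G) : G))
    (cocycle_three_tetrahedra
      (fun i j k => Additive.ofMul (⟨α i j k, hcent i j k⟩ : Subgroup.center G))
      (fun i j k l => congrArg Additive.ofMul (Subtype.ext (hcoc i j k l)))
      i j k (τ s) (τ t) (τ u))
  simp only [toMul_add, toMul_sub, toMul_ofMul, Subgroup.coe_mul,
    div_eq_mul_inv, Subgroup.coe_inv] at key
  have hcomm : ∀ (x : G) (i j k : I), x * α i j k = α i j k * x :=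
    fun x i j k => Subgroup.mem_center_iff.mp (hcent i j k) x
  have hcomm' : ∀ x : G, x * (α j i (τ t) * (α i (τ t) (τ s))⁻¹)
      = α j i (τ t) * (α i (τ t) (τ s))⁻¹ * x :=
    Subgroup.mem_center_iff.mp (mul_mem (hcent _ _ _) (inv_mem (hcent _ _ _)))
  rw [hψ, hψ, hψ]
  calc α k j (τ u) * (α j (τ u) (τ t))⁻¹ * g u t
        * (α j i (τ t) * (α i (τ t) (τ s))⁻¹ * g t s)
      = α k j (τ u) * (α j (τ u) (τ t))⁻¹ * (g u t * (α j i (τ t) * (α i (τ t) (τ s))⁻¹))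
        * g t s := by simp only [mul_assoc]
    _ = α k j (τ u) * (α j (τ u) (τ t))⁻¹ * (α j i (τ t) * (α i (τ t) (τ s))⁻¹)
        * (g u t * g t s) := by rw [hcomm']; simp only [mul_assoc]
    _ = α k j (τ u) * (α j (τ u) (τ t))⁻¹ * (α j i (τ t) * (α i (τ t) (τ s))⁻¹)
        * α (τ u) (τ t) (τ s) * g u s := by rw [hg, hcomm (g u s)]; simp only [mul_assoc]
    _ = α k j i * (α k i (τ u) * (α i (τ u) (τ s))⁻¹ * g u s) := by
        rw [key, mul_assoc]
end

section
/- Let G be a group, I a type, and let α, α̃: I → I → I → G and η: I → I → G be functions taking values in the centre of G such that η i j = (η j i)⁻¹ and α i j k = α̃ i j k · η j k · (η i k)⁻¹ · η i j for all i, j, k ∈ I (so α and α̃ are cohomologous via the 1-cochain η). Let A be a type with a map ℓ: A → I, and let g: A → A → G satisfy the α-twisted cocycle condition g a b · g b c = g a c · α (ℓ a) (ℓ b) (ℓ c) for all a, b, c ∈ A. Then g̃: A → A → G defined by g̃ a b = g a b · η (ℓ b) (ℓ a) satisfies the α̃-twisted cocycle condition: g̃ a b · g̃ b c = g̃ a c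 · α̃ (ℓ a) (ℓ b) (ℓ c) for all a, b, c ∈ A. -/
/-!
Centrality of `η` collects its factors to the right of `g a b * g b c`, which the cocycle condition
turns into `g a c * α (ℓ a) (ℓ b) (ℓ c)`. Expanding `α` by the coboundary relation, antisymmetry of
`η` cancels every `η` factor except `(η (ℓ a) (ℓ c))⁻¹ = η (ℓ c) (ℓ a)`, which is the one that
twists `g a c` into `gt a c`.
-/

/-- If `α` and `α̃` are cohomologous via the central 1-cochain `η`, then twisting an
`α`-twisted cocycle `g` by `η` produces an `α̃`-twisted cocycle. -/
theorem stmt9 {G : Type*} [Group G] {I A : Type*}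
    (α αt : I → I → I → G) (η : I → I → G)
    (hαc : ∀ i j k, α i j k ∈ Subgroup.center G)
    (hαtc : ∀ i j k, αt i j k ∈ Subgroup.center G)
    (hηc : ∀ i j, η i j ∈ Subgroup.center G)
    (hηinv : ∀ i j, η i j = (η j i)⁻¹)
    (hcob : ∀ i j k, α i j k = αt i j k * η j k * (η i k)⁻¹ * η i j)
    (ℓ : A → I) (g : A → A → G)
    (hg : ∀ a b c, g a b * g b c = g a c * α (ℓ a) (ℓ b) (ℓ c))
    (gt : A → A → G)
    (hgt : ∀ a b, gt a b = g a b * η (ℓ b) (ℓ a)) :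
    ∀ a b c, gt a b * gt b c = gt a c * αt (ℓ a) (ℓ b) (ℓ c) := by
  intro a b c
  have hcomm (i j : I) (x : G) : η i j * x = x * η i j :=
    (Subgroup.mem_center_iff.mp (hηc i j) x).symm
  calc gt a b * gt b c
      = g a b * (η (ℓ b) (ℓ a) * g b c) * η (ℓ c) (ℓ b) := by
        rw [hgt, hgt]; group
    _ = (g a b * g b c) * η (ℓ b) (ℓ a) * η (ℓ c) (ℓ b) := by
        rw [hcomm]; group
    _ = g a c * αt (ℓ a) (ℓ b) (ℓ c) * (η (ℓ b) (ℓ c) * (η (ℓ a) (ℓ c))⁻¹)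
          * (η (ℓ b) (ℓ c))⁻¹ := by
        rw [hg, hcob, hηinv (ℓ b) (ℓ a), hηinv (ℓ c) (ℓ b)]; group
    _ = g a c * (αt (ℓ a) (ℓ b) (ℓ c) * η (ℓ c) (ℓ a)) := by
        rw [hcomm, hηinv (ℓ c) (ℓ a)]; group
    _ = gt a c * αt (ℓ a) (ℓ b) (ℓ c) := by
        rw [← hcomm, hgt, mul_assoc]
end
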